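/- Let G be a branch group acting on a rooted tree T. Then G has no non-trivial abelian subgroup K satisfying K ⊴ K^G ⊴ G, where K^G denotes the subgroup of G generated by all G-conjugates of K. In particular, G has no non-trivial abelian normal subgroup. -/

import Mathlib

/-!  Common definitions: rooted trees of type `(m n)`, tree automorphisms,
rigid stabilizers, branch groups, and auxiliary notions. -/

universe u

/-- Vertices of the rooted tree of type `m`: finite sequences `(x_0, …, x_{n-1})`
with `x_i ∈ {1, …, m i}` (encoded as `Fin (m i)`). -/
def Vertex (m : ℕ → ℕ) : Type := Σ n : ℕ, ∀ i : Fin n, Fin (m i)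

namespace Vertex

variable {m : ℕ → ℕ}

/-- The level of a vertex: its length. -/
def level (v : Vertex m) : ℕ := v.1

/-- `v` is a (weak) prefix of `w`; i.e. `w` lies in the subtree `T_v`
(`w = v` or `w` is a descendant of `v`). -/
def IsPrefix (v w : Vertex m) : Prop :=
  ∃ h : v.1 ≤ w.1, ∀ i : Fin v.1, w.2 (Fin.castLE h i) = v.2 i

/-- `w` is a child (one-step extension) of `v`. -/
def IsChild (v w : Vertex m) : Prop := w.1 = v.1 + 1 ∧ IsPrefix v w

end Vertex

/-- The `n`-th layer `L_n` of the tree: all vertices of level `n`. -/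
def layer (m : ℕ → ℕ) (n : ℕ) : Set (Vertex m) := {v | v.1 = n}

section Rist

variable {m : ℕ → ℕ} (G : Type*) [Group G] [MulAction G (Vertex m)]

/-- The rigid stabilizer of a vertex `v`: all elements fixing every vertex
outside the subtree `T_v`. -/
def rist (v : Vertex m) : Subgroup G :=
  ⨅ w ∈ {w : Vertex m | ¬ Vertex.IsPrefix v w}, MulAction.stabilizer G w

/-- The subgroup generated by the rigid stabilizers of the vertices in `X`. -/
def ristSet (X : Set (Vertex m)) : Subgroup G := ⨆ v ∈ X, rist G v

/-- `rist_G(n)`, the rigid stabilizer of the `n`-th layer. -/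
def ristLayer (m : ℕ → ℕ) (G : Type*) [Group G] [MulAction G (Vertex m)] (n : ℕ) :
    Subgroup G :=
  ristSet G (layer m n)

/-- The orbit of the vertex `v` under a subgroup `H ≤ G`. -/
def subOrbit (H : Subgroup G) (v : Vertex m) : Set (Vertex m) :=
  {w | ∃ h ∈ H, h • v = w}

/-- The set of orbits of a subgroup `H ≤ G` on a set `X` of vertices. -/
def orbitsOn (H : Subgroup G) (X : Set (Vertex m)) : Set (Set (Vertex m)) :=
  (fun v => subOrbit G H v) '' X

end Rist

/-- `G` is a branch group on the rooted tree of type `m` (with respect to the given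
action): the action is faithful and by tree automorphisms, `G` acts transitively on
each layer, and each `rist_G(n)` has finite index in `G`. -/
structure IsBranchGroup (m : ℕ → ℕ) (G : Type*) [Group G] [MulAction G (Vertex m)] :
    Prop where
  faithful : ∀ g : G, (∀ v : Vertex m, g • v = v) → g = 1
  aut : ∀ (g : G) (v w : Vertex m), Vertex.IsChild v w ↔ Vertex.IsChild (g • v) (g • w)
  trans : ∀ v w : Vertex m, v.1 = w.1 → ∃ g : G, g • v = w
  ristFiniteIndex : ∀ n : ℕ, (ristLayer m G n).FiniteIndex

/-- A group is virtually soluble if it has a soluble subgroup of finite index. -/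
def VirtuallySolvable (Γ : Type*) [Group Γ] : Prop :=
  ∃ S : Subgroup Γ, S.FiniteIndex ∧ IsSolvable ↥S

/-- A group is virtually abelian if it has an abelian subgroup of finite index. -/
def VirtuallyAbelian (Γ : Type*) [Group Γ] : Prop :=
  ∃ S : Subgroup Γ, S.FiniteIndex ∧ ∀ a ∈ S, ∀ b ∈ S, a * b = b * a

/-- For subgroups `A ≤ B` of a group with `A` normalised by `B`, this says that the
factor `B/A` belongs to the class `𝔛`. -/
def FactorIn (𝔛 : (Γ : Type u) → [inst : Group Γ] → Prop) {G : Type u} [Group G]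
    (A B : Subgroup G) : Prop :=
  ∃ hn : (A.subgroupOf B).Normal, letI := hn; 𝔛 (↥B ⧸ A.subgroupOf B)

/-- The factor `B/A` is virtually soluble. -/
def FactorVirtuallySolvable {G : Type*} [Group G] (A B : Subgroup G) : Prop :=
  ∃ hn : (A.subgroupOf B).Normal,
    letI := hn; VirtuallySolvable (↥B ⧸ A.subgroupOf B)

/-- The factor `B/A` is virtually abelian. -/
def FactorVirtuallyAbelian {G : Type*} [Group G] (A B : Subgroup G) : Prop :=
  ∃ hn : (A.subgroupOf B).Normal,
    letI := hn; VirtuallyAbelian (↥B ⧸ A.subgroupOf B)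

/-- `Γ` has `r` infinite normal subgroups that generate their direct product in `Γ`:
each of them intersects trivially the subgroup generated by the others. -/
def HasIndepFamily (Γ : Type*) [Group Γ] (r : ℕ) : Prop :=
  ∃ N : Fin r → Subgroup Γ, (∀ i, (N i).Normal) ∧ (∀ i, Infinite ↥(N i)) ∧
    ∀ i, N i ⊓ (⨆ j ∈ ({i}ᶜ : Set (Fin r)), N j) = ⊥

/-!
Suppose that `k ∈ K` is nontrivial. Faithfulness and level preservation give a vertex `v` such that
the subtree `T_v` is disjoint from its translate `k • T_v`. For `r` supported on `T_v`, the element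
`⁅⁅k⁻¹, r⁻¹⁆, k⁆ = (k⁻¹ r⁻¹ k) r (k r⁻¹ k⁻¹) r` lies in `K`, because the inner commutator lies in
`K^G`; on `T_v` it acts as `r ^ 2`, the two bracketed factors being supported on `k⁻¹ • T_v` and
`k • T_v`. As `K` is abelian, any two squares of elements of `rist_G(v)` commute.

This is impossible when all rigid stabilizers are nontrivial: a nontrivial element never commutes
with an element displacing its support, so inside `rist_G(v)` one finds first an `r` with
`r ^ 2 ≠ 1`, and then an `s` supported on a subtree displaced by `r ^ 2`, again with `s ^ 2 ≠ 1`.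

Only supports enter the argument, so it applies to every faithful micro-supported action on a set.
For branch groups, `rist_G(v)` is nontrivial since otherwise `rist_G(n)`, with `n` the level of `v`,
would be a trivial subgroup of finite index in the infinite group `G`.
-/

open MulAction
open scoped Pointwise commutatorElement

section Microsupported

variable {G α : Type*} [Group G] [MulAction G α]

variable (G α) in
/-- A point-free form of micro-supported actions: every nontrivial group element displaces some set
`U` that contains the support of a nontrivial element. The rigid stabilizer of `U` is expressed as
the pointwise stabilizer `fixingSubgroup G Uᶜ` of the complement. -/
def IsMicrosupported : Prop :=
  ∀ g : G, g ≠ 1 → ∃ U : Set α, Disjoint (g • U) U ∧ fixingSubgroup G Uᶜ ≠ ⊥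

variable {U V : Set α} {g k r s : G} {x : α}

lemma smul_mem_iff_of_mem_fixingSubgroup_compl (hg : g ∈ fixingSubgroup G Uᶜ) :
    g • x ∈ U ↔ x ∈ U :=
  smul_mem_of_set_mem_fixedBy <| set_mem_fixedBy_of_movedBy_subset <|
    (mem_fixingSubgroup_compl_iff_movedBy_subset G).1 hg

lemma subset_of_disjoint_smul (hg : g ∈ fixingSubgroup G Uᶜ)
    (hV : Disjoint (g • V) V) : V ⊆ U := by
  intro x hxV
  by_contra hxU
  have hgx : g • x = x := (mem_fixingSubgroup_iff G).1 hg x hxU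
  exact Set.disjoint_left.1 hV (Set.smul_mem_smul_set hxV) (hgx.symm ▸ hxV)

lemma fixingSubgroup_compl_le_of_disjoint_smul (hg : g ∈ fixingSubgroup G Uᶜ)
    (hV : Disjoint (g • V) V) : fixingSubgroup G Vᶜ ≤ fixingSubgroup G Uᶜ :=
  fixingSubgroup_antitone G α <| Set.compl_subset_compl.2 <|
    subset_of_disjoint_smul hg hV

lemma not_commute_of_disjoint_smul [FaithfulSMul G α] (hs : s ∈ fixingSubgroup G Uᶜ) (hs1 : s ≠ 1)
    (hU : Disjoint (g • U) U) : ¬ Commute s g :=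
  have hsU : (fixedBy α s)ᶜ ⊆ U := (mem_fixingSubgroup_compl_iff_movedBy_subset G).1 hs
  not_commute_of_disjoint_movedBy_preimage hs1 <|
    (hU.mono (Set.smul_set_mono hsU) hsU).symm

lemma conj_smul_eq_of_disjoint_smul (hr : r ∈ fixingSubgroup G Uᶜ) (hU : Disjoint (k • U) U)
    (hx : x ∈ U) : (k * r * k⁻¹) • x = x := by
  have hkx : k⁻¹ • x ∉ U := fun h ↦
    Set.disjoint_right.1 hU hx (Set.mem_smul_set_iff_inv_smul_mem.2 h)
  rw [mul_smul, mul_smul, (mem_fixingSubgroup_iff G).1 hr _ hkx, smul_inv_smul]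

lemma commutator_commutator_smul_eq_sq_smul (hr : r ∈ fixingSubgroup G Uᶜ)
    (hU : Disjoint (k • U) U) (hx : x ∈ U) : ⁅⁅k⁻¹, r⁻¹⁆, k⁆ • x = r ^ 2 • x := by
  have hU' : Disjoint (k⁻¹ • U) U := Set.disjoint_smul_set_right.1 hU.symm
  have hrx : r • x ∈ U := (smul_mem_iff_of_mem_fixingSubgroup_compl hr).2 hx
  have hrrx : r • r • x ∈ U := (smul_mem_iff_of_mem_fixingSubgroup_compl hr).2 hrx
  calc ⁅⁅k⁻¹, r⁻¹⁆, k⁆ • x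
      = (k⁻¹ * r⁻¹ * k⁻¹⁻¹) • r • (k * r⁻¹ * k⁻¹) • r • x := by
        simp only [commutatorElement_def, smul_smul]
        group
    _ = (k⁻¹ * r⁻¹ * k⁻¹⁻¹) • r • r • x := by
        rw [conj_smul_eq_of_disjoint_smul (inv_mem hr) hU hrx]
    _ = r • r • x := conj_smul_eq_of_disjoint_smul (inv_mem hr) hU' hrrx
    _ = r ^ 2 • x := by rw [smul_smul, sq]

lemma commute_sq_of_commute_commutator [FaithfulSMul G α] (hr : r ∈ fixingSubgroup G Uᶜ)
    (hs : s ∈ fixingSubgroup G Uᶜ) (hU : Disjoint (k • U) U)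
    (hrs : Commute ⁅⁅k⁻¹, r⁻¹⁆, k⁆ ⁅⁅k⁻¹, s⁻¹⁆, k⁆) : Commute (r ^ 2) (s ^ 2) := by
  refine eq_of_smul_eq_smul fun x : α ↦ ?_
  by_cases hx : x ∈ U
  · have hr2 : r ^ 2 • x ∈ U := (smul_mem_iff_of_mem_fixingSubgroup_compl (pow_mem hr 2)).2 hx
    have hs2 : s ^ 2 • x ∈ U := (smul_mem_iff_of_mem_fixingSubgroup_compl (pow_mem hs 2)).2 hx
    calc (r ^ 2 * s ^ 2) • x
        = (⁅⁅k⁻¹, r⁻¹⁆, k⁆ * ⁅⁅k⁻¹, s⁻¹⁆, k⁆) • x := by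
          rw [mul_smul, mul_smul, commutator_commutator_smul_eq_sq_smul hs hU hx,
            commutator_commutator_smul_eq_sq_smul hr hU hs2]
      _ = (⁅⁅k⁻¹, s⁻¹⁆, k⁆ * ⁅⁅k⁻¹, r⁻¹⁆, k⁆) • x := by rw [hrs.eq]
      _ = (s ^ 2 * r ^ 2) • x := by
          rw [mul_smul, mul_smul, commutator_commutator_smul_eq_sq_smul hr hU hx,
            commutator_commutator_smul_eq_sq_smul hs hU hr2]
  · have hrs2 := mul_mem (pow_mem hr 2) (pow_mem hs 2)
    have hsr2 := mul_mem (pow_mem hs 2) (pow_mem hr 2)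
    exact ((mem_fixingSubgroup_iff G).1 hrs2 x hx).trans
      ((mem_fixingSubgroup_iff G).1 hsr2 x hx).symm

variable [FaithfulSMul G α]

lemma IsMicrosupported.exists_sq_ne_one (h : IsMicrosupported G α)
    (hU : fixingSubgroup G Uᶜ ≠ ⊥) : ∃ r ∈ fixingSubgroup G Uᶜ, r ^ 2 ≠ 1 := by
  by_contra! hsq
  obtain ⟨r, hr, hr1⟩ := (Subgroup.bot_or_exists_ne_one _).resolve_left hU
  obtain ⟨V, hrV, hV⟩ := h r hr1
  obtain ⟨s, hs, hs1⟩ := (Subgroup.bot_or_exists_ne_one _).resolve_left hV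
  have hsU : s ∈ fixingSubgroup G Uᶜ := fixingSubgroup_compl_le_of_disjoint_smul hr hrV hs
  have hcomm : ∀ a b : fixingSubgroup G Uᶜ, Commute a b :=
    Commute.of_orderOf_dvd_two fun a ↦ orderOf_dvd_of_pow_eq_one (Subtype.ext (hsq a a.2))
  exact not_commute_of_disjoint_smul hs hs1 hrV <|
    congrArg Subtype.val (hcomm ⟨s, hsU⟩ ⟨r, hr⟩)

lemma IsMicrosupported.exists_not_commute_sq (h : IsMicrosupported G α)
    (hU : fixingSubgroup G Uᶜ ≠ ⊥) :
    ∃ r ∈ fixingSubgroup G Uᶜ, ∃ s ∈ fixingSubgroup G Uᶜ, ¬ Commute (r ^ 2) (s ^ 2) := by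
  obtain ⟨r, hr, hr2⟩ := h.exists_sq_ne_one hU
  obtain ⟨V, hrV, hV⟩ := h (r ^ 2) hr2
  obtain ⟨s, hs, hs2⟩ := h.exists_sq_ne_one hV
  have hsU : s ∈ fixingSubgroup G Uᶜ :=
    fixingSubgroup_compl_le_of_disjoint_smul (pow_mem hr 2) hrV hs
  exact ⟨r, hr, s, hsU, fun hcomm ↦ not_commute_of_disjoint_smul (pow_mem hs 2) hs2 hrV hcomm.symm⟩

end Microsupported

lemma commutator_commutator_mem_of_conj_mem {G : Type*} [Group G] {K : Subgroup G}
    (hK : ∀ g ∈ Subgroup.normalClosure (K : Set G), ∀ k ∈ K, g * k * g⁻¹ ∈ K)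
    {k : G} (hk : k ∈ K) (g : G) : ⁅⁅k⁻¹, g⁆, k⁆ ∈ K := by
  have hcl : k ∈ Subgroup.normalClosure (K : Set G) := Subgroup.subset_normalClosure hk
  have hcomm : ⁅k⁻¹, g⁆ ∈ Subgroup.normalClosure (K : Set G) := by
    have hconj := Subgroup.normalClosure_normal.conj_mem k hcl g
    simpa only [commutatorElement_def, inv_inv, mul_assoc] using mul_mem (inv_mem hcl) hconj
  exact mul_mem (hK _ hcomm k hk) (inv_mem hk)

theorem no_abelian_subnormal_subgroup_general {G α : Type*} [Group G] [MulAction G α]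
    [FaithfulSMul G α] (h : IsMicrosupported G α) (K : Subgroup G)
    (hab : ∀ a ∈ K, ∀ b ∈ K, a * b = b * a)
    (hK : ∀ g ∈ Subgroup.normalClosure (K : Set G), ∀ k ∈ K, g * k * g⁻¹ ∈ K) : K = ⊥ := by
  by_contra hne
  obtain ⟨k, hk, hk1⟩ := K.bot_or_exists_ne_one.resolve_left hne
  obtain ⟨U, hkU, hU⟩ := h k hk1
  obtain ⟨r, hr, s, hs, hrs⟩ := h.exists_not_commute_sq hU
  exact hrs <| commute_sq_of_commute_commutator hr hs hkU <|
    hab _ (commutator_commutator_mem_of_conj_mem hK hk r⁻¹)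
      _ (commutator_commutator_mem_of_conj_mem hK hk s⁻¹)

namespace Vertex

variable {m : ℕ → ℕ} {u v w : Vertex m}

lemma IsPrefix.refl (v : Vertex m) : IsPrefix v v := ⟨le_rfl, fun _ ↦ rfl⟩

lemma IsPrefix.trans (huv : IsPrefix u v) (hvw : IsPrefix v w) : IsPrefix u w :=
  ⟨huv.1.trans hvw.1, fun i ↦ (hvw.2 (Fin.castLE huv.1 i)).trans (huv.2 i)⟩

lemma IsPrefix.eq_of_level_eq (hu : IsPrefix u w) (hv : IsPrefix v w) (h : u.level = v.level) :
    u = v := by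
  obtain ⟨n, u⟩ := u
  obtain ⟨_, v⟩ := v
  obtain rfl : n = _ := h
  congr 1
  exact funext fun i ↦ (hu.2 i).symm.trans (hv.2 i)

lemma IsChild.level_eq (h : IsChild v w) : w.level = v.level + 1 := h.1

lemma isPrefix_iff_reflTransGen_isChild : IsPrefix v w ↔ Relation.ReflTransGen IsChild v w := by
  refine ⟨fun h ↦ ?_, fun h ↦ ?_⟩
  · obtain ⟨n, w⟩ := w
    obtain ⟨hn, hw⟩ : ∃ hn : v.1 ≤ n, ∀ i, w (Fin.castLE hn i) = v.2 i := h
    induction n, hn using Nat.le_induction with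
    | base =>
      have hvw : v = ⟨v.1, w⟩ := IsPrefix.eq_of_level_eq (w := ⟨v.1, w⟩) ⟨le_rfl, hw⟩ (.refl _) rfl
      exact hvw ▸ .refl
    | succ n _ ih => exact (ih (fun i ↦ w i.castSucc) hw).tail ⟨rfl, n.le_succ, fun _ ↦ rfl⟩
  · induction h with
    | refl => exact .refl v
    | tail _ hchild ih => exact ih.trans hchild.2

lemma IsPrefix.map {f : Vertex m → Vertex m} (hf : ∀ v w, IsChild v w → IsChild (f v) (f w))
    (h : IsPrefix v w) : IsPrefix (f v) (f w) :=
  isPrefix_iff_reflTransGen_isChild.2 <|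
    Relation.ReflTransGen.lift f hf _ _ (isPrefix_iff_reflTransGen_isChild.1 h)

lemma level_le_level_map {f : Vertex m → Vertex m} (hf : ∀ v w, IsChild v w → IsChild (f v) (f w))
    (v : Vertex m) : v.level ≤ (f v).level := by
  let root : Vertex m := ⟨0, fun i ↦ i.elim0⟩
  have hroot : Relation.ReflTransGen IsChild root v :=
    isPrefix_iff_reflTransGen_isChild.1 ⟨Nat.zero_le _, fun i ↦ i.elim0⟩
  induction hroot with
  | refl => exact Nat.zero_le _
  | tail _ hchild ih =>
    rw [hchild.level_eq, (hf _ _ hchild).level_eq]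
    exact Nat.succ_le_succ ih

/-- The subtree `T_v`, consisting of `v` and its descendants. -/
def subtree (v : Vertex m) : Set (Vertex m) := {w | IsPrefix v w}

lemma disjoint_subtree (h : u.level = v.level) (hne : u ≠ v) : Disjoint u.subtree v.subtree :=
  Set.disjoint_left.2 fun _ hu hv ↦ hne (IsPrefix.eq_of_level_eq hu hv h)

section Action

variable {G : Type*} [Group G] [MulAction G (Vertex m)]

lemma rist_eq_fixingSubgroup (v : Vertex m) : rist G v = fixingSubgroup G v.subtreeᶜ := by
  ext g
  simp [rist, subtree, mem_fixingSubgroup_iff]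

variable (haut : ∀ (g : G) (v w : Vertex m), IsChild v w → IsChild (g • v) (g • w))
include haut

lemma level_smul (g : G) (v : Vertex m) : (g • v).level = v.level := by
  refine le_antisymm ?_ (level_le_level_map (haut g) v)
  simpa only [inv_smul_smul] using level_le_level_map (haut g⁻¹) (g • v)

lemma smul_subtree (g : G) (v : Vertex m) : g • v.subtree = (g • v).subtree := by
  ext w
  rw [Set.mem_smul_set_iff_inv_smul_mem]
  constructor
  · intro (h : IsPrefix v (g⁻¹ • w))
    exact smul_inv_smul g w ▸ h.map (haut g)
  · intro (h : IsPrefix (g • v) w)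
    exact inv_smul_smul g v ▸ h.map (haut g⁻¹)

lemma rist_smul (g : G) (v : Vertex m) :
    rist G (g • v) = (rist G v).map (MulAut.conj g).toMonoidHom := by
  rw [rist_eq_fixingSubgroup, rist_eq_fixingSubgroup, SubMulAction.fixingSubgroup_map_conj_eq]
  rw [Set.smul_set_compl, smul_subtree haut]

lemma isMicrosupported_of_rist_ne_bot [FaithfulSMul G (Vertex m)]
    (hrist : ∀ v : Vertex m, rist G v ≠ ⊥) : IsMicrosupported G (Vertex m) := by
  intro g hg
  obtain ⟨v, hv⟩ : ∃ v : Vertex m, g • v ≠ v := by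
    by_contra! hfix
    exact hg (eq_of_smul_eq_smul fun v : Vertex m ↦ (hfix v).trans (one_smul G v).symm)
  refine ⟨v.subtree, ?_, rist_eq_fixingSubgroup (G := G) v ▸ hrist v⟩
  rw [smul_subtree haut]
  exact disjoint_subtree (level_smul haut g v) hv

end Action

lemma infinite_of_level_transitive {G : Type*} [Group G] [MulAction G (Vertex m)]
    (hm : ∀ n, 2 ≤ m n) (htrans : ∀ v w : Vertex m, v.level = w.level → ∃ g : G, g • v = w) :
    Infinite G := by
  by_contra hfin
  rw [not_infinite_iff_finite] at hfin
  set N := Nat.card G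
  let v : Vertex m := ⟨N, fun i ↦ ⟨0, two_pos.trans_le (hm i)⟩⟩
  choose φ hφ using fun f : ∀ i : Fin N, Fin (m i) ↦ htrans v ⟨N, f⟩ rfl
  have hφ_inj : Function.Injective φ := fun f f' h ↦
    sigma_mk_injective ((hφ f).symm.trans (h ▸ hφ f'))
  have hcard : 2 ^ N ≤ N :=
    calc 2 ^ N ≤ ∏ i : Fin N, m i := by
          simpa using Finset.pow_card_le_prod Finset.univ (fun i : Fin N ↦ m i) 2 fun i _ ↦ hm i
      _ = Nat.card (∀ i : Fin N, Fin (m i)) := by simp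
      _ ≤ N := Nat.card_le_card_of_injective φ hφ_inj
  exact N.lt_two_pow_self.not_ge hcard

end Vertex

namespace IsBranchGroup

variable {m : ℕ → ℕ} {G : Type*} [Group G] [MulAction G (Vertex m)]

lemma isChild_smul (hG : IsBranchGroup m G) (g : G) (v w : Vertex m) (h : Vertex.IsChild v w) :
    Vertex.IsChild (g • v) (g • w) :=
  (hG.aut g v w).1 h

lemma faithfulSMul (hG : IsBranchGroup m G) : FaithfulSMul G (Vertex m) where
  eq_of_smul_eq_smul {g h} hgh :=
    inv_mul_eq_one.1 <| hG.faithful _ fun v ↦ by rw [mul_smul, ← hgh v, inv_smul_smul]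

lemma rist_ne_bot (hG : IsBranchGroup m G) [Infinite G] (v : Vertex m) : rist G v ≠ ⊥ := by
  intro hv
  have hlayer : ristLayer m G v.level = ⊥ := by
    refine le_bot_iff.1 (iSup₂_le fun w hw ↦ ?_)
    obtain ⟨g, rfl⟩ := hG.trans v w hw.symm
    rw [Vertex.rist_smul hG.isChild_smul, hv, Subgroup.map_bot]
  have hindex := (hG.ristFiniteIndex v.level).index_ne_zero
  rw [hlayer, Subgroup.index_bot, Nat.card_eq_zero_of_infinite] at hindex
  exact hindex rfl

lemma isMicrosupported (hG : IsBranchGroup m G) (hm : ∀ n, 2 ≤ m n) :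
    IsMicrosupported G (Vertex m) :=
  have := hG.faithfulSMul
  have := Vertex.infinite_of_level_transitive hm hG.trans
  Vertex.isMicrosupported_of_rist_ne_bot hG.isChild_smul hG.rist_ne_bot

end IsBranchGroup

/-- **Lemma.** A branch group `G` has no non-trivial abelian subgroup `K` with
`K ⊴ K^G ⊴ G` (here `K^G` is the normal closure of `K` in `G`, which is automatically
normal in `G`).  In particular `G` has no non-trivial abelian normal subgroup. -/
theorem no_abelian_subnormal_subgroup
    (m : ℕ → ℕ) (hm : ∀ n, 2 ≤ m n)
    (G : Type*) [Group G] [MulAction G (Vertex m)] (hG : IsBranchGroup m G) :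
    (∀ K : Subgroup G, (∀ a ∈ K, ∀ b ∈ K, a * b = b * a) →
      (∀ g ∈ Subgroup.normalClosure (K : Set G), ∀ k ∈ K, g * k * g⁻¹ ∈ K) →
      K = ⊥) ∧
    (∀ K : Subgroup G, K.Normal → (∀ a ∈ K, ∀ b ∈ K, a * b = b * a) → K = ⊥) := by
  have := hG.faithfulSMul
  have key := no_abelian_subnormal_subgroup_general (hG.isMicrosupported hm)
  exact ⟨key, fun K hK hab ↦ key K hab fun g _ k hk ↦ hK.conj_mem k hk g⟩
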